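/- Let φ : N₁ ⥤ N₂ be an admissible epi-functor between nested graphs, and define an equivalence relation on the objects of N₁ by: A₁ ∼ B₁ (for A₁ ≠ B₁) iff φ(A₁) = φ(B₁) and both A₁ and B₁ are vertices of the fiber φ⁻¹(φ(A₁)). Let N₂' be the category obtained by identifying equivalent objects of N₁, with morphisms freely generated by the morphisms of N₁ subject to the composition relations of N₁. Then N₂' is a nested graph, i.e., N₂' contains no cycle of flags and admits a grading into a finite ordinal. -/

import Mathlib

open CategoryTheory

universe v u

/-- A morphism in a category is an identity morphism (up to `eqToHom`). -/
def IsId {C : Type u} [Category.{v} C] {A B : C} (f : A ⟶ B) : Prop :=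
  ∃ h : A = B, f = eqToHom h

/-- A flag in a nested graph is a non-identity morphism. -/
def IsFlag {C : Type u} [Category.{v} C] {A B : C} (f : A ⟶ B) : Prop :=
  ¬ IsId f

/-- An irreducible flag is a flag that cannot be written as the composite of two flags. -/
def IsIrred {C : Type u} [Category.{v} C] {A B : C} (f : A ⟶ B) : Prop :=
  IsFlag f ∧ ¬ ∃ (X : C) (g : A ⟶ X) (h : X ⟶ B), IsFlag g ∧ IsFlag h ∧ g ≫ h = f

/-- A grading: a functor to the finite ordinal `Fin n` (viewed as a preorder category)
sending every non-identity morphism to a non-identity morphism. -/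
def IsGrading {C : Type u} [Category.{v} C] {n : ℕ} (G : C ⥤ Fin n) : Prop :=
  ∀ ⦃A B : C⦄ (f : A ⟶ B), IsFlag f → IsFlag (G.map f)

/-- A nested graph: a category admitting a grading into some finite ordinal. -/
def IsNestedGraph (C : Type u) [Category.{v} C] : Prop :=
  ∃ (n : ℕ) (G : C ⥤ Fin n), IsGrading G

/-- A functor `φ` contracts a flag `f` if `φ.map f` is an identity. -/
def Contracts {C D : Type u} [Category.{v} C] [Category.{v} D]
    (φ : C ⥤ D) {A B : C} (f : A ⟶ B) : Prop :=
  IsId (φ.map f)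

/-- An admissible functor: it maps irreducible flags to identities or irreducible flags,
and whenever it contracts an irreducible flag with domain `A`, it contracts every
irreducible flag with domain `A`. -/
def IsAdmissible {C D : Type u} [Category.{v} C] [Category.{v} D] (φ : C ⥤ D) : Prop :=
  (∀ ⦃A B : C⦄ (f : A ⟶ B), IsIrred f → IsId (φ.map f) ∨ IsIrred (φ.map f)) ∧
  (∀ ⦃A B B' : C⦄ (f : A ⟶ B) (g : A ⟶ B'), IsIrred f → IsIrred g →
      Contracts φ f → Contracts φ g)

/-- The morphisms of the codomain generated by the image of a functor. -/
inductive GenBy {C D : Type u} [Category.{v} C] [Category.{v} D] (φ : C ⥤ D) :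
    ∀ {X Y : D}, (X ⟶ Y) → Prop
  | id (X : D) : GenBy φ (𝟙 X)
  | map {A B : C} (f : A ⟶ B) : GenBy φ (φ.map f)
  | comp {X Y Z : D} (f : X ⟶ Y) (g : Y ⟶ Z) :
      GenBy φ f → GenBy φ g → GenBy φ (f ≫ g)

/-- An epi-functor: its image generates the codomain. -/
def IsEpiFunctor {C D : Type u} [Category.{v} C] [Category.{v} D] (φ : C ⥤ D) : Prop :=
  Function.Surjective φ.obj ∧ ∀ ⦃X Y : D⦄ (f : X ⟶ Y), GenBy φ f

/-- `μ : C ⥤ D` exhibits `D` as the quotient of `C` identifying `r`-related objects,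
with morphisms freely generated by the morphisms of `C` subject to the composition
relations of `C` (expressed via the universal property). -/
def IsQuotientBy {C D : Type u} [Category.{v} C] [Category.{v} D]
    (r : C → C → Prop) (μ : C ⥤ D) : Prop :=
  (∀ A B : C, μ.obj A = μ.obj B ↔ Relation.EqvGen r A B) ∧
  Function.Surjective μ.obj ∧
  (∀ ⦃X Y : D⦄ (f : X ⟶ Y), GenBy μ f) ∧
  (∀ (E : Type u) [Category.{v} E] (F : C ⥤ E),
      (∀ A B : C, r A B → F.obj A = F.obj B) → ∃! F' : D ⥤ E, μ ⋙ F' = F)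

/-- A merger: an admissible epi-functor exhibiting its codomain as the quotient of its
domain by an equivalence relation on objects, with morphisms freely generated subject to
the composition relations of the domain. -/
def IsMerger {C D : Type u} [Category.{v} C] [Category.{v} D] (μ : C ⥤ D) : Prop :=
  IsAdmissible μ ∧ IsEpiFunctor μ ∧
    ∃ r : C → C → Prop, Equivalence r ∧ IsQuotientBy r μ

/-- `A` is a vertex of its fiber under `φ`: it is not the domain of any flag
contracted by `φ`. -/
def IsVertexOver {C D : Type u} [Category.{v} C] [Category.{v} D]
    (φ : C ⥤ D) (A : C) : Prop :=
  ∀ ⦃B : C⦄ (f : A ⟶ B), Contracts φ f → IsId f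

/-- `A₁` is a vertex of the fiber of `φ` over `A₂`. -/
def IsFiberVertex {C D : Type u} [Category.{v} C] [Category.{v} D]
    (φ : C ⥤ D) (A₂ : D) (A₁ : C) : Prop :=
  φ.obj A₁ = A₂ ∧ IsVertexOver φ A₁

/-- A contraction: an admissible epi-functor each of whose fibers is a corolla,
i.e. has a unique vertex. -/
def IsContraction {C D : Type u} [Category.{v} C] [Category.{v} D] (κ : C ⥤ D) : Prop :=
  IsAdmissible κ ∧ IsEpiFunctor κ ∧ ∀ A₂ : D, ∃! A₁ : C, IsFiberVertex κ A₂ A₁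

/-- The canonical merger relation of `φ`: it relates distinct objects `A ≠ B` exactly when
`φ A = φ B` and both `A` and `B` are vertices of the fiber of `φ` over `φ A`. -/
def mergerRel {C D : Type u} [Category.{v} C] [Category.{v} D] (φ : C ⥤ D) :
    C → C → Prop :=
  fun A B => A ≠ B ∧ φ.obj A = φ.obj B ∧ IsVertexOver φ A ∧ IsVertexOver φ B

/-- A canonical merger–contraction decomposition of `φ`: the merger part is the quotient
of the domain identifying, within each fiber of `φ`, all objects that are vertices of that
fiber. -/
def IsCanonicalDecomp {C P D : Type u} [Category.{v} C] [Category.{v} P] [Category.{v} D]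
    (φ : C ⥤ D) (μ : C ⥤ P) (κ : P ⥤ D) : Prop :=
  IsQuotientBy (mergerRel φ) μ ∧ μ ⋙ κ = φ

/-- Two merger–contraction pairs are equal as morphisms of nested graphs: one is obtained
from the other by shifting an isomorphism from the merger to the contraction. -/
def PairEquiv {A B P P' : Type u} [Category.{v} A] [Category.{v} B]
    [Category.{v} P] [Category.{v} P']
    (μ : A ⥤ P) (κ : P ⥤ B) (μ' : A ⥤ P') (κ' : P' ⥤ B) : Prop :=
  ∃ (e : P ⥤ P') (e' : P' ⥤ P), e ⋙ e' = 𝟭 P ∧ e' ⋙ e = 𝟭 P' ∧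
    μ ⋙ e = μ' ∧ e ⋙ κ' = κ

/-- A category contains no cycle of flags. -/
def NoFlagCycles (C : Type u) [Category.{v} C] : Prop :=
  ∀ (k : ℕ), 0 < k → ∀ (obj : Fin (k + 1) → C)
    (flag : ∀ i : Fin k, obj i.castSucc ⟶ obj i.succ),
    (∀ i, IsFlag (flag i)) → obj 0 ≠ obj (Fin.last k)

theorem IsGrading.lt_of_isFlag {C : Type u} [Category.{v} C] {n : ℕ} {G : C ⥤ Fin n}
    (hG : IsGrading G) {A B : C} {f : A ⟶ B} (hf : IsFlag f) : G.obj A < G.obj B :=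
  lt_of_le_of_ne (leOfHom (G.map f)) fun h => hG f hf ⟨h, Subsingleton.elim _ _⟩

/-- A category with a `Fin n`-valued rank strictly increasing along flags is a
nested graph. -/
theorem isNestedGraph_of_rank {C : Type u} [Category.{v} C] {n : ℕ} (rank : C → Fin n)
    (hrank : ∀ ⦃A B : C⦄ (f : A ⟶ B), IsFlag f → rank A < rank B) : IsNestedGraph C := by
  have hle : ∀ ⦃A B : C⦄ (_ : A ⟶ B), rank A ≤ rank B := fun A B f => by
    by_cases hf : IsId f
    · exact (congrArg rank hf.1).le
    · exact (hrank f hf).le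
  exact ⟨n, { obj := rank, map := fun f => homOfLE (hle f) },
    fun A B f hf hid => (hrank f hf).ne hid.1⟩

theorem noFlagCycles_of_rank {C : Type u} [Category.{v} C] {α : Type*} [Preorder α]
    (rank : C → α) (hrank : ∀ ⦃A B : C⦄ (f : A ⟶ B), IsFlag f → rank A < rank B) :
    NoFlagCycles C := by
  intro k hk obj flag hflag h
  have hmono : StrictMono (rank ∘ obj) :=
    Fin.strictMono_iff_lt_succ.2 fun i => hrank (flag i) (hflag i)
  have hlt : (0 : Fin (k + 1)) < Fin.last k := by
    rw [Fin.lt_def]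
    simpa using hk
  exact (hmono hlt).ne (congrArg rank h)

theorem IsId.map {C D : Type u} [Category.{v} C] [Category.{v} D] (F : C ⥤ D) {A B : C}
    {f : A ⟶ B} (hf : IsId f) : IsId (F.map f) := by
  obtain ⟨rfl, rfl⟩ := hf
  exact ⟨rfl, by simp⟩

/-- A rank on the codomain that strictly increases along images of flags strictly increases
along every flag generated by these images. -/
theorem GenBy.isId_or_lt {C D : Type u} [Category.{v} C] [Category.{v} D] {F : C ⥤ D}
    {α : Type*} [Preorder α] {rank : D → α}
    (hrank : ∀ ⦃A B : C⦄ (f : A ⟶ B), IsFlag f → rank (F.obj A) < rank (F.obj B))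
    {X Y : D} {f : X ⟶ Y} (hf : GenBy F f) : IsId f ∨ rank X < rank Y := by
  induction hf with
  | id X => exact Or.inl ⟨rfl, rfl⟩
  | map f =>
    by_cases hf : IsId f
    · exact Or.inl (hf.map F)
    · exact Or.inr (hrank f hf)
  | comp f g _ _ hf hg =>
    rcases hf with ⟨rfl, rfl⟩ | hf
    · simpa using hg
    · rcases hg with ⟨rfl, rfl⟩ | hg
      · exact Or.inr hf
      · exact Or.inr (hf.trans hg)

open Classical in
/-- The rank of an object within its fiber: all vertices of the fiber get the top rank. -/
noncomputable def fiberRank {C D : Type u} [Category.{v} C] [Category.{v} D] (φ : C ⥤ D)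
    {n : ℕ} (G : C ⥤ Fin n) (A : C) : Fin (n + 1) :=
  if IsVertexOver φ A then Fin.last n else (G.obj A).castSucc

theorem fiberRank_lt_of_contracts {C D : Type u} [Category.{v} C] [Category.{v} D]
    {φ : C ⥤ D} {n : ℕ} {G : C ⥤ Fin n} (hG : IsGrading G) {A B : C} {f : A ⟶ B}
    (hf : IsFlag f) (hφ : Contracts φ f) : fiberRank φ G A < fiberRank φ G B := by
  have hA : ¬ IsVertexOver φ A := fun h => hf (h f hφ)
  by_cases hB : IsVertexOver φ B
  · simp [fiberRank, hA, hB, Fin.castSucc_lt_last]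
  · simpa [fiberRank, hA, hB] using hG.lt_of_isFlag hf

/-- The lexicographic rank on the domain of `φ`: first the grade of the image, then the rank
within the fiber. -/
noncomputable def lexRank {C D : Type u} [Category.{v} C] [Category.{v} D] (φ : C ⥤ D)
    {m n : ℕ} (G : C ⥤ Fin n) (H : D ⥤ Fin m) (A : C) : Fin m ×ₗ Fin (n + 1) :=
  toLex (H.obj (φ.obj A), fiberRank φ G A)

theorem lexRank_lt_of_isFlag {C D : Type u} [Category.{v} C] [Category.{v} D] {φ : C ⥤ D}
    {m n : ℕ} {G : C ⥤ Fin n} {H : D ⥤ Fin m} (hG : IsGrading G) (hH : IsGrading H)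
    {A B : C} {f : A ⟶ B} (hf : IsFlag f) : lexRank φ G H A < lexRank φ G H B := by
  rw [lexRank, lexRank, Prod.Lex.toLex_lt_toLex]
  by_cases hφ : IsId (φ.map f)
  · exact Or.inr ⟨congrArg H.obj hφ.1, fiberRank_lt_of_contracts hG hf hφ⟩
  · exact Or.inl (hH.lt_of_isFlag hφ)

theorem lexRank_eq_of_mergerRel {C D : Type u} [Category.{v} C] [Category.{v} D] {φ : C ⥤ D}
    {m n : ℕ} (G : C ⥤ Fin n) (H : D ⥤ Fin m) {A B : C} (h : mergerRel φ A B) :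
    lexRank φ G H A = lexRank φ G H B := by
  obtain ⟨-, hφ, hA, hB⟩ := h
  simp [lexRank, fiberRank, hφ, hA, hB]

/-- if `φ : N₁ ⥤ N₂` is an admissible epi-functor between nested graphs and
`μ : N₁ ⥤ N₂'` is the quotient of `N₁` identifying distinct objects `A₁ ∼ B₁` exactly
when `φ A₁ = φ B₁` and both are vertices of the fiber `φ⁻¹ (φ A₁)` (with morphisms freely
generated by the morphisms of `N₁` subject to the composition relations of `N₁`), then
`N₂'` is a nested graph: it contains no cycle of flags and admits a grading into a finite
ordinal. -/
theorem canonical_quotient_is_nestedGraph {N₁ N₂ N₂' : Type u}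
    [Category.{v} N₁] [Category.{v} N₂] [Category.{v} N₂']
    (h₁ : IsNestedGraph N₁) (h₂ : IsNestedGraph N₂)
    (φ : N₁ ⥤ N₂) (hadm : IsAdmissible φ) (hepi : IsEpiFunctor φ)
    (μ : N₁ ⥤ N₂') (hμ : IsQuotientBy (mergerRel φ) μ) :
    NoFlagCycles N₂' ∧ IsNestedGraph N₂' := by
  obtain ⟨n, G, hG⟩ := h₁
  obtain ⟨m, H, hH⟩ := h₂
  obtain ⟨hobj, hsurj, hgen, -⟩ := hμ
  let e : Fin m ×ₗ Fin (n + 1) ≃o Fin (Fintype.card (Fin m ×ₗ Fin (n + 1))) :=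
    (Fintype.orderIsoFinOfCardEq _ rfl).symm
  let rank : N₂' → Fin (Fintype.card (Fin m ×ₗ Fin (n + 1))) :=
    fun X => e (lexRank φ G H (Function.surjInv hsurj X))
  have hrank : ∀ A : N₁, rank (μ.obj A) = e (lexRank φ G H A) := fun A =>
    congrArg e <| (Equivalence.eqvGen_iff (eq_equivalence.comap (lexRank φ G H))).1 <|
      ((hobj _ _).1 (Function.surjInv_eq hsurj (μ.obj A))).mono
        fun _ _ => lexRank_eq_of_mergerRel G H
  have hlt : ∀ ⦃X Y : N₂'⦄ (f : X ⟶ Y), IsFlag f → rank X < rank Y := fun X Y f hf =>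
    ((hgen f).isId_or_lt fun A B g hg => by
      rw [hrank, hrank]
      exact e.strictMono (lexRank_lt_of_isFlag hG hH hg)).resolve_left hf
  exact ⟨noFlagCycles_of_rank rank hlt, isNestedGraph_of_rank rank hlt⟩
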